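/- Let k be a field and let A and B be commutative Noetherian k-algebras such that R = A ⊗_k B is Noetherian. Let I ⊆ A and J ⊆ B be nonzero proper ideals such that I^t ≠ I^{t+1} and J^t ≠ J^{t+1} for all t ≤ n−1. Then (I+J)^{(n)} = (I+J)^n in R if and only if I^{(t)} = I^t and J^{(t)} = J^t for all t ≤ n. -/

import Mathlib

/-!
The criterion for `(I + J)^{(n)} = (I + J)ⁿ` in `R = A ⊗ₖ B` rests on two facts about tensor
products over a field.

**Unmixedness is preserved.** Call a ring unmixed if every nonzero element survives in the
localization at some minimal prime; `Q^{(m)} = Q^m` with `m ≥ 1` makes `R ⧸ Q^m` unmixed. If `A` and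
`B` are unmixed `k`-algebras, then so is `A ⊗ B` (`Unmixed.tensor`). Tensoring over `k` preserves
joint injectivity, so a nonzero element of `A ⊗ B` survives in some `A_p ⊗ B_q` with `p`, `q`
minimal, and minimal primes contract to minimal primes along the flat map `A ⊗ B → A_p ⊗ B_q`. This
reduces to local rings with nil maximal ideal. Lifting a transcendence basis of the residue field
makes such a ring integral over a purely transcendental extension of `k`
(`exists_integral_over_ratFunc`). Hence `A_p ⊗ B_q` is flat and integral over `E ⊗ F` with `E`, `F`
purely transcendental; `E ⊗ F` is a domain, and a ring that is flat and integral over a domain is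
unmixed (`unmixed_of_integral_flat`).

**Intersections.** `(I + J)ⁿ` is the intersection of the ideals `I^{a+1} + J^{b+1}` over
`a + b + 1 = n` (`sup_pow_le`, `mem_pow_of_forall_mem_sup`), because `I^a ∩ J^b = I^a J^b` in `R`
(`inf_le_mul`).

If the symbolic powers of `I` and `J` are the ordinary ones up to `n`, then each
`R ⧸ (I^{a+1} + J^{b+1}) = A ⧸ I^{a+1} ⊗ B ⧸ J^{b+1}` is unmixed, with the same minimal primes as
`R ⧸ (I + J)`, so `(I + J)^{(n)}` lies in every `I^{a+1} + J^{b+1}`, hence in `(I + J)ⁿ`.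

Conversely, minimal primes of `I + J` contract to minimal primes of `I` by flatness, so for
`f ∈ I^{(t)}` and `g ∈ J^{n-t}` the element `f ⊗ g` lies in
`(I + J)^{(n)} = (I + J)ⁿ ⊆ I^t + J^{n-t+1}`. Choosing `g ∉ J^{n-t+1}` forces `f ∈ I^t`, since a pure
tensor over a field vanishes only if one of its factors does. The argument for `J` is symmetric.
-/

open TensorProduct

/-- The `n`-th symbolic power of an ideal `Q`:
`Q^{(n)} = ⋂_{P ∈ Min(Q)} (Q^n R_P ∩ R)`. -/
noncomputable def symbPow {R : Type*} [CommRing R] (Q : Ideal R) (n : ℕ) : Ideal R :=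
  ⨅ (P : Ideal R) (hP : P ∈ Q.minimalPrimes),
    letI : P.IsPrime := hP.1.1
    Ideal.comap (algebraMap R (Localization.AtPrime P))
      (Ideal.map (algebraMap R (Localization.AtPrime P)) (Q ^ n))

/-! ### Purely transcendental subfields -/

/-- A local `k`-algebra with nil maximal ideal is integral over a purely transcendental extension
of `k` inside it: lift a transcendence basis of the residue field. -/
theorem exists_integral_over_ratFunc {k A : Type} [Field k] [CommRing A] [Algebra k A]
    [IsLocalRing A] (hnil : ∀ x ∈ IsLocalRing.maximalIdeal A, IsNilpotent x) :
    ∃ (ι : Type) (g : FractionRing (MvPolynomial ι k) →ₐ[k] A), g.toRingHom.IsIntegral := by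
  obtain ⟨ι, x, hx⟩ := exists_isTranscendenceBasis' k (IsLocalRing.ResidueField A)
  choose y hy using fun i => IsLocalRing.residue_surjective (R := A) (x i)
  let φ : MvPolynomial ι k →ₐ[k] A := MvPolynomial.aeval y
  let r : A →ₐ[k] IsLocalRing.ResidueField A := IsScalarTower.toAlgHom k A _
  have hr : ∀ a, r a = IsLocalRing.residue A a := fun a => rfl
  have hrφ : r.comp φ = MvPolynomial.aeval x := by
    ext i
    simp [φ, hr, hy]
  -- a nonzero polynomial stays nonzero in the residue field, so it becomes a unit of `A`
  have hunit : ∀ p : nonZeroDivisors (MvPolynomial ι k), IsUnit (φ p) := by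
    intro p
    rw [← IsLocalRing.residue_ne_zero_iff_isUnit, ← hr, ← AlgHom.comp_apply, hrφ]
    have h0 := nonZeroDivisors.coe_ne_zero p
    exact fun h => h0 (hx.1 (by simpa using h))
  let g : FractionRing (MvPolynomial ι k) →ₐ[k] A := IsLocalization.liftAlgHom
    (M := nonZeroDivisors (MvPolynomial ι k)) (f := φ) hunit
  refine ⟨ι, g, fun a => ?_⟩
  let _ : Algebra (FractionRing (MvPolynomial ι k)) (IsLocalRing.ResidueField A) :=
    (r.comp g).toRingHom.toAlgebra
  have hg : ∀ p, g (algebraMap (MvPolynomial ι k) _ p) = φ p := by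
    intro p
    simp [g]
  have halg : IsAlgebraic (FractionRing (MvPolynomial ι k)) (IsLocalRing.residue A a) := by
    obtain ⟨q, hq0, hq⟩ := hx.isAlgebraic.isAlgebraic (IsLocalRing.residue A a)
    let e := hx.1.aevalEquiv
    let h : Algebra.adjoin k (Set.range x) →+* FractionRing (MvPolynomial ι k) :=
      (algebraMap (MvPolynomial ι k) _).comp (e.symm : _ →+* MvPolynomial ι k)
    have hinj : Function.Injective h :=
      (IsFractionRing.injective (MvPolynomial ι k) _).comp e.symm.injective
    refine ⟨q.map h, (Polynomial.map_ne_zero_iff hinj).2 hq0, ?_⟩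
    have hcomp : (algebraMap (FractionRing (MvPolynomial ι k)) (IsLocalRing.ResidueField A)).comp h =
        algebraMap (Algebra.adjoin k (Set.range x)) (IsLocalRing.ResidueField A) := by
      refine RingHom.ext fun c => ?_
      obtain ⟨c, rfl⟩ := e.surjective c
      change r (g (algebraMap _ _ (e.symm (e c)))) = _
      rw [e.symm_apply_apply, hg, ← AlgHom.comp_apply, hrφ]
      simp [e]
    rw [Polynomial.aeval_def, Polynomial.eval₂_map, hcomp]
    exact hq
  obtain ⟨f, hf, hfa⟩ := isAlgebraic_iff_isIntegral.1 halg
  -- a monic equation over the residue field holds in `A` up to a nilpotent; take a power of it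
  have hmem : Polynomial.eval₂ g.toRingHom a f ∈ IsLocalRing.maximalIdeal A := by
    rw [← IsLocalRing.residue_eq_zero_iff, Polynomial.hom_eval₂]
    exact hfa
  obtain ⟨N, hN⟩ := hnil _ hmem
  exact ⟨f ^ N, hf.pow N, by rw [Polynomial.eval₂_pow, hN]⟩

attribute [local instance] Algebra.TensorProduct.rightAlgebra in
/-- `E ⊗ k(κ)` is a localization of the polynomial ring `E[κ]`. -/
theorem isDomain_tensor_ratFunc {k E : Type} [Field k] [Field E] [Algebra k E] (κ : Type) :
    IsDomain (E ⊗[k] FractionRing (MvPolynomial κ k)) := by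
  let P := MvPolynomial κ k
  let F := FractionRing P
  have : IsDomain (E ⊗[k] P) :=
    (MvPolynomial.algebraTensorAlgEquiv (σ := κ) k E).toMulEquiv.isDomain _
  let f := Algebra.TensorProduct.map (AlgHom.id E E) (IsScalarTower.toAlgHom k P F)
  have hf : Function.Injective f :=
    Module.Flat.lTensor_preserves_injective_linearMap (M := E)
      (IsScalarTower.toAlgHom k P F).toLinearMap (IsFractionRing.injective P F)
  let _ : Algebra (E ⊗[k] P) (E ⊗[k] F) := f.toRingHom.toAlgebra
  have : IsScalarTower E (E ⊗[k] P) (E ⊗[k] F) := .of_algebraMap_eq' f.comp_algebraMap.symm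
  have := IsLocalization.tensorProduct_tensorProduct_right k E (nonZeroDivisors P) F
    (by ext x; simp [RingHom.algebraMap_toAlgebra, f]; rfl)
  refine IsLocalization.isDomain_of_le_nonZeroDivisors (E ⊗[k] F)
    (M := (nonZeroDivisors P).map (Algebra.TensorProduct.includeRight (R := k) (A := E))) ?_
  rintro _ ⟨p, hp, rfl⟩
  refine mem_nonZeroDivisors_of_ne_zero fun h => nonZeroDivisors.ne_zero hp ?_
  exact Algebra.TensorProduct.includeRight_injective (algebraMap k E).injective (by rw [map_zero]; exact h)

/-! ### Unmixed rings -/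

/-- Every nonzero element survives in the localization at some minimal prime `p`, that is, it is not
killed by any `s ∉ p`. For a Noetherian ring this says that there are no embedded primes. -/
def Unmixed (R : Type*) [CommRing R] : Prop :=
  ∀ a : R, a ≠ 0 → ∃ p ∈ minimalPrimes R, ∀ s ∉ p, s * a ≠ 0

/-- By flatness the annihilator of `a ≠ 0` misses the nonzero elements of `D`, so it lies in a prime
contracting to `0`; such a prime is minimal by incomparability for integral extensions. -/
theorem unmixed_of_integral_flat {D S : Type*} [CommRing D] [IsDomain D] [CommRing S]
    (f : D →+* S) (hint : f.IsIntegral) (hflat : f.Flat) : Unmixed S := by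
  algebraize [f]
  intro a ha
  have hdisj : Disjoint ((Ideal.span {a}).annihilator : Set S) (Algebra.algebraMapSubmonoid S (nonZeroDivisors D)) := by
    rw [Set.disjoint_left]
    rintro _ h ⟨d, hd, rfl⟩
    rw [SetLike.mem_coe, Submodule.mem_annihilator_span_singleton, smul_eq_mul, ← Algebra.smul_def] at h
    exact ha ((smul_eq_zero_iff_right (nonZeroDivisors.ne_zero hd)).1 h)
  obtain ⟨p, hp, hle, hpd⟩ := Ideal.exists_le_prime_disjoint _ _ hdisj
  refine ⟨p, ⟨⟨hp, bot_le⟩, ?_⟩, fun s hs h => hs (hle ((Submodule.mem_annihilator_span_singleton _ _).2 h))⟩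
  rintro q ⟨hq, -⟩ hqp
  by_contra hne
  have hlt := Ideal.IsIntegral.comap_lt_comap (R := D) (lt_of_le_not_ge hqp hne)
  refine (lt_of_le_of_lt bot_le hlt).ne' (eq_bot_iff.2 fun d hd => ?_)
  by_contra hd0
  exact Set.disjoint_left.1 hpd hd ⟨d, mem_nonZeroDivisors_of_ne_zero hd0, rfl⟩

theorem isIntegralElem_of_comp_eq {A E S T : Type*} [CommRing A] [CommRing E] [CommRing S]
    [CommRing T] {g : E →+* A} {m : T →+* S} (i : E →+* T) (j : A →+* S)
    (hc : m.comp i = j.comp g) {a : A} (ha : g.IsIntegralElem a) : m.IsIntegralElem (j a) := by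
  obtain ⟨p, hp, hpa⟩ := ha
  refine ⟨p.map i, hp.map _, ?_⟩
  rw [Polynomial.eval₂_map, hc, ← Polynomial.hom_eval₂, hpa, map_zero]

theorem integral_tensor_map {k A B E F : Type*} [CommRing k] [CommRing A] [CommRing B] [CommRing E]
    [CommRing F] [Algebra k A] [Algebra k B] [Algebra k E] [Algebra k F]
    (g : E →ₐ[k] A) (h : F →ₐ[k] B) (hg : g.toRingHom.IsIntegral) (hh : h.toRingHom.IsIntegral) :
    (Algebra.TensorProduct.map g h).toRingHom.IsIntegral := by
  intro x
  induction x with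
  | zero => exact RingHom.isIntegralElem_zero _
  | add x y hx hy => exact RingHom.IsIntegralElem.add _ hx hy
  | tmul a b =>
    have ha := isIntegralElem_of_comp_eq (m := (Algebra.TensorProduct.map g h).toRingHom)
      (Algebra.TensorProduct.includeLeft : E →ₐ[k] E ⊗[k] F).toRingHom
      (Algebra.TensorProduct.includeLeft : A →ₐ[k] A ⊗[k] B).toRingHom
      (RingHom.ext fun e => by simp) (hg a)
    have hb := isIntegralElem_of_comp_eq (m := (Algebra.TensorProduct.map g h).toRingHom)
      (Algebra.TensorProduct.includeRight : F →ₐ[k] E ⊗[k] F).toRingHom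
      (Algebra.TensorProduct.includeRight : B →ₐ[k] A ⊗[k] B).toRingHom
      (RingHom.ext fun e => by simp) (hh b)
    simpa using RingHom.IsIntegralElem.mul _ ha hb

/-- The case of `Unmixed.tensor` where both factors are local with nil maximal ideal. -/
theorem unmixed_tensor_local {k A B : Type} [Field k] [CommRing A] [Algebra k A] [CommRing B]
    [Algebra k B] [IsLocalRing A] [IsLocalRing B]
    (hA : ∀ x ∈ IsLocalRing.maximalIdeal A, IsNilpotent x)
    (hB : ∀ x ∈ IsLocalRing.maximalIdeal B, IsNilpotent x) : Unmixed (A ⊗[k] B) := by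
  obtain ⟨ι, g, hg⟩ := exists_integral_over_ratFunc (k := k) hA
  obtain ⟨κ, h, hh⟩ := exists_integral_over_ratFunc (k := k) hB
  have := isDomain_tensor_ratFunc (k := k) (E := FractionRing (MvPolynomial ι k)) κ
  exact unmixed_of_integral_flat _ (integral_tensor_map g h hg hh)
    (RingHom.Flat.tensorProductMap (RingHom.Flat.of_isField (Field.toIsField _) _)
      (RingHom.Flat.of_isField (Field.toIsField _) _))

/-! ### Unmixedness of tensor products -/

/-- Flat ring maps satisfy going-down, so minimal primes contract to minimal primes. -/
theorem comap_mem_minimalPrimes_of_flat {R S : Type*} [CommRing R] [CommRing S] (f : R →+* S)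
    (hf : f.Flat) {Q : Ideal S} (hQ : Q ∈ minimalPrimes S) : Q.comap f ∈ minimalPrimes R := by
  algebraize [f]
  have := hQ.1.1
  refine ⟨⟨inferInstance, bot_le⟩, ?_⟩
  rintro p ⟨hp, -⟩ hle
  have : Q.LiesOver (Q.comap f) := ⟨rfl⟩
  obtain ⟨P, hPQ, hP, hover⟩ := Ideal.exists_ideal_le_liesOver_of_le (R := R) Q hle
  have : Q ≤ P := hQ.2 ⟨hP, bot_le⟩ hPQ
  rw [hover.over]
  exact Ideal.comap_mono this

/-- A nonzero tensor over a field has a nonzero contraction with some functional on the second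
factor. -/
theorem exists_functional {k V W : Type*} [Field k] [AddCommGroup V] [Module k V]
    [AddCommGroup W] [Module k W] {f : V ⊗[k] W} (hf : f ≠ 0) :
    ∃ w : W →ₗ[k] k, TensorProduct.rid k V (w.lTensor V f) ≠ 0 := by
  classical
  let b := Module.Basis.ofVectorSpace k W
  let e := TensorProduct.equivFinsuppOfBasisRight (M := V) b
  obtain ⟨i, hi⟩ := Finsupp.ne_iff.1 ((map_ne_zero_iff e e.injective).2 hf)
  refine ⟨b.coord i, ?_⟩
  have key : TensorProduct.rid k V ((b.coord i).lTensor V f) = e f i := by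
    clear hi hf
    induction f with
    | zero => simp
    | add x y hx hy => simp [hx, hy]
    | tmul v w => simp [e]
  rw [key]
  exact hi

/-- Tensoring with `W` preserves joint injectivity of a family of linear maps, finite or not. -/
theorem exists_rTensor_ne_zero {k V W : Type*} {ι : Type*} {V' : ι → Type*} [Field k]
    [AddCommGroup V] [Module k V] [AddCommGroup W] [Module k W]
    [∀ i, AddCommGroup (V' i)] [∀ i, Module k (V' i)] (φ : ∀ i, V →ₗ[k] V' i)
    (hφ : ∀ v ≠ 0, ∃ i, φ i v ≠ 0) {f : V ⊗[k] W} (hf : f ≠ 0) :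
    ∃ i, (φ i).rTensor W f ≠ 0 := by
  obtain ⟨w, hw⟩ := exists_functional hf
  obtain ⟨i, hi⟩ := hφ _ hw
  refine ⟨i, fun h => hi ?_⟩
  have : φ i (TensorProduct.rid k V (w.lTensor V f)) =
      TensorProduct.rid k (V' i) (w.lTensor (V' i) ((φ i).rTensor W f)) := by
    clear h hi hw hf
    induction f with
    | zero => simp
    | add x y hx hy => simp only [map_add, hx, hy]
    | tmul v w => simp
  rw [this, h, map_zero, map_zero]

theorem isNilpotent_of_mem_maximalIdeal {A : Type*} [CommRing A] (p : Ideal A) [p.IsPrime]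
    (hp : p ∈ minimalPrimes A) (x : Localization.AtPrime p)
    (hx : x ∈ IsLocalRing.maximalIdeal (Localization.AtPrime p)) : IsNilpotent x := by
  have h := IsLocalization.AtPrime.radical_map_of_mem_minimalPrimes
    (A := Localization.AtPrime p) p ⊥ hp
  rw [← mem_nilradical, nilradical, Ideal.zero_eq_bot]
  rw [Ideal.map_bot] at h
  rw [h, Localization.AtPrime.map_eq_maximalIdeal]
  exact hx

theorem Unmixed.exists_localization_ne_zero {A : Type*} [CommRing A] (hA : Unmixed A) {a : A}
    (ha : a ≠ 0) : ∃ p : {p : PrimeSpectrum A // p.asIdeal ∈ minimalPrimes A},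
      algebraMap A (Localization.AtPrime p.1.asIdeal) a ≠ 0 := by
  obtain ⟨p, hp, h⟩ := hA a ha
  have := hp.1.1
  refine ⟨⟨⟨p, hp.1.1⟩, hp⟩, fun h0 => ?_⟩
  obtain ⟨s, hs⟩ := (IsLocalization.map_eq_zero_iff p.primeCompl _ _).1 h0
  exact h s s.2 hs

theorem Unmixed.tensor {k A B : Type} [Field k] [CommRing A] [Algebra k A] [CommRing B]
    [Algebra k B] (hA : Unmixed A) (hB : Unmixed B) : Unmixed (A ⊗[k] B) := by
  intro f hf
  obtain ⟨⟨⟨p, hp⟩, hpm⟩, h1⟩ := exists_rTensor_ne_zero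
    (ι := {p : PrimeSpectrum A // p.asIdeal ∈ minimalPrimes A})
    (fun p => (IsScalarTower.toAlgHom k A (Localization.AtPrime p.1.asIdeal)).toLinearMap)
    (fun a ha => hA.exists_localization_ne_zero ha) hf
  dsimp only at h1 hpm
  obtain ⟨⟨⟨q, hq⟩, hqm⟩, h2⟩ := exists_rTensor_ne_zero
    (ι := {p : PrimeSpectrum B // p.asIdeal ∈ minimalPrimes B})
    (fun p => (IsScalarTower.toAlgHom k B (Localization.AtPrime p.1.asIdeal)).toLinearMap)
    (fun a ha => hB.exists_localization_ne_zero ha)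
    ((map_ne_zero_iff (TensorProduct.comm k (Localization.AtPrime p) B)
      (TensorProduct.comm k _ _).injective).2 h1)
  dsimp only at h2 hqm
  -- `f` survives in `A_p ⊗ B_q`; the two one-sided localizations combine to the map `m`
  let m := Algebra.TensorProduct.map (IsScalarTower.toAlgHom k A (Localization.AtPrime p))
    (IsScalarTower.toAlgHom k B (Localization.AtPrime q))
  have hm : m f ≠ 0 := by
    intro h
    apply h2
    apply (TensorProduct.comm k (Localization.AtPrime q) (Localization.AtPrime p)).injective
    rw [map_zero, ← h]
    clear h h2 h1 hf
    induction f with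
    | zero => simp
    | add x y hx hy => simp only [map_add, hx, hy]
    | tmul a b => simp [m]
  have hflat : m.toRingHom.Flat := RingHom.Flat.tensorProductMap
    ((RingHom.flat_algebraMap_iff).2 (IsLocalization.flat _ p.primeCompl))
    ((RingHom.flat_algebraMap_iff).2 (IsLocalization.flat _ q.primeCompl))
  obtain ⟨Q, hQ, hQs⟩ := unmixed_tensor_local (k := k) (isNilpotent_of_mem_maximalIdeal p hpm)
    (isNilpotent_of_mem_maximalIdeal q hqm) _ hm
  refine ⟨_, comap_mem_minimalPrimes_of_flat m.toRingHom hflat hQ, fun s hs h => hQs _ hs ?_⟩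
  change m s * m f = 0
  rw [← map_mul, h, map_zero]

/-! ### Symbolic powers -/

theorem minimalPrimes_eq_of_pow_le {R : Type*} [CommRing R] {K L : Ideal R} {n : ℕ} (h1 : K ≤ L)
    (h2 : L ^ n ≤ K) : K.minimalPrimes = L.minimalPrimes := by
  have key : ∀ P : Ideal R, (P.IsPrime ∧ K ≤ P) ↔ (P.IsPrime ∧ L ≤ P) := fun P =>
    ⟨fun ⟨hP, h⟩ => ⟨hP, hP.le_of_pow_le (h2.trans h)⟩, fun ⟨hP, h⟩ => ⟨hP, h1.trans h⟩⟩
  simp only [Ideal.minimalPrimes, Ideal.IsMinimalPrime, key]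

theorem mem_symbPow {R : Type*} [CommRing R] {Q : Ideal R} {n : ℕ} {x : R} :
    x ∈ symbPow Q n ↔ ∀ P ∈ Q.minimalPrimes, ∃ s ∉ P, s * x ∈ Q ^ n := by
  simp only [symbPow, Ideal.mem_iInf, Ideal.mem_comap]
  refine forall₂_congr fun P hP => ?_
  have := hP.1.1
  rw [IsLocalization.algebraMap_mem_map_algebraMap_iff P.primeCompl]
  rfl

theorem pow_le_symbPow {R : Type*} [CommRing R] (Q : Ideal R) (n : ℕ) : Q ^ n ≤ symbPow Q n :=
  fun x hx => mem_symbPow.2 fun P hP =>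
    ⟨1, (Ideal.ne_top_iff_one P).1 hP.1.1.ne_top, by simpa using hx⟩

theorem unmixed_quotient {R : Type*} [CommRing R] {Q : Ideal R} {n : ℕ} (hn : n ≠ 0)
    (h : symbPow Q n = Q ^ n) : Unmixed (R ⧸ Q ^ n) := by
  intro a ha
  obtain ⟨x, rfl⟩ := Ideal.Quotient.mk_surjective a
  rw [Ne, Ideal.Quotient.eq_zero_iff_mem, ← h, mem_symbPow] at ha
  push Not at ha
  obtain ⟨P, hP, hs⟩ := ha
  rw [← minimalPrimes_eq_of_pow_le (Ideal.pow_le_self hn) le_rfl, Ideal.minimalPrimes_eq_comap] at hP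
  obtain ⟨p, hp, rfl⟩ := hP
  refine ⟨p, hp, fun s hsp => ?_⟩
  obtain ⟨s, rfl⟩ := Ideal.Quotient.mk_surjective s
  rw [← map_mul, Ne, Ideal.Quotient.eq_zero_iff_mem]
  exact hs s hsp

/-- One inclusion of `(I + J)ⁿ = ⋂ (I^{a+1} + J^{b+1})`, over `a + b + 1 = n`. -/
theorem sup_pow_le {R : Type*} [CommRing R] (I J : Ideal R) (a b : ℕ) :
    (I ⊔ J) ^ (a + b + 1) ≤ I ^ (a + 1) ⊔ J ^ (b + 1) := by
  rw [← Ideal.add_eq_sup, ← Ideal.add_eq_sup, add_pow, Ideal.sum_eq_sup]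
  refine Finset.sup_le fun i hi => ?_
  by_cases hn : a + 1 ≤ i
  · exact (Ideal.mul_le_left.trans (Ideal.mul_le_left.trans
      ((Ideal.pow_le_pow_right hn).trans le_sup_left)))
  · refine (Ideal.mul_le_left.trans (Ideal.mul_le_right.trans
      ((Ideal.pow_le_pow_right ?_).trans le_sup_right)))
    lia

/-! ### Sums of ideals in a tensor product -/

section
variable {k A B : Type} [Field k] [CommRing A] [CommRing B] [Algebra k A] [Algebra k B]

/-- The canonical map `A ⊗ B → A ⧸ I ⊗ B ⧸ J`, whose kernel is the ideal generated by `I` and `J`. -/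
noncomputable def quotMap (I : Ideal A) (J : Ideal B) : A ⊗[k] B →ₐ[k] (A ⧸ I) ⊗[k] (B ⧸ J) :=
  Algebra.TensorProduct.map (Ideal.Quotient.mkₐ k I) (Ideal.Quotient.mkₐ k J)

theorem quotMap_surjective (I : Ideal A) (J : Ideal B) :
    Function.Surjective (quotMap (k := k) I J) :=
  Algebra.TensorProduct.map_surjective _ _ (Ideal.Quotient.mkₐ_surjective k I)
    (Ideal.Quotient.mkₐ_surjective k J)

theorem comap_quotMap_bot (I : Ideal A) (J : Ideal B) :
    Ideal.comap (quotMap (k := k) I J) ⊥ =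
      I.map (Algebra.TensorProduct.includeLeft : A →ₐ[k] A ⊗[k] B) ⊔
        J.map (Algebra.TensorProduct.includeRight : B →ₐ[k] A ⊗[k] B) := by
  have := Algebra.TensorProduct.map_ker (Ideal.Quotient.mkₐ k I) (Ideal.Quotient.mkₐ k J)
    (Ideal.Quotient.mkₐ_surjective k I) (Ideal.Quotient.mkₐ_surjective k J)
  have hI : RingHom.ker (Ideal.Quotient.mkₐ k I) = I :=
    Ideal.ext fun _ => Ideal.Quotient.eq_zero_iff_mem
  have hJ : RingHom.ker (Ideal.Quotient.mkₐ k J) = J :=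
    Ideal.ext fun _ => Ideal.Quotient.eq_zero_iff_mem
  rw [hI, hJ] at this
  exact this

theorem minimalPrimes_sup_eq (I : Ideal A) (J : Ideal B) :
    (I.map (Algebra.TensorProduct.includeLeft : A →ₐ[k] A ⊗[k] B) ⊔
        J.map (Algebra.TensorProduct.includeRight : B →ₐ[k] A ⊗[k] B)).minimalPrimes =
      Ideal.comap (quotMap (k := k) I J).toRingHom '' minimalPrimes ((A ⧸ I) ⊗[k] (B ⧸ J)) := by
  rw [← comap_quotMap_bot]
  exact Ideal.comap_minimalPrimes_eq_of_surjective
    (f := (quotMap (k := k) I J).toRingHom) (quotMap_surjective I J) ⊥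

/-- The ideal `I^{a+1} + J^{b+1}` contains `(I + J)^{a+b+1}` and has the same minimal primes as
`I + J`; its quotient is unmixed, so it also contains the symbolic power. -/
theorem mem_sup_of_unmixed (I : Ideal A) (J : Ideal B) (a b : ℕ)
    (hI : symbPow I (a + 1) = I ^ (a + 1)) (hJ : symbPow J (b + 1) = J ^ (b + 1)) {x : A ⊗[k] B}
    (hx : x ∈ symbPow (I.map (Algebra.TensorProduct.includeLeft : A →ₐ[k] A ⊗[k] B) ⊔
        J.map (Algebra.TensorProduct.includeRight : B →ₐ[k] A ⊗[k] B)) (a + b + 1)) :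
    x ∈ (I.map (Algebra.TensorProduct.includeLeft : A →ₐ[k] A ⊗[k] B)) ^ (a + 1) ⊔
        (J.map (Algebra.TensorProduct.includeRight : B →ₐ[k] A ⊗[k] B)) ^ (b + 1) := by
  set IR := I.map (Algebra.TensorProduct.includeLeft : A →ₐ[k] A ⊗[k] B) with hIR
  set JR := J.map (Algebra.TensorProduct.includeRight : B →ₐ[k] A ⊗[k] B) with hJR
  have hmin := minimalPrimes_sup_eq (k := k) (I ^ (a + 1)) (J ^ (b + 1))
  have hker := comap_quotMap_bot (k := k) (I ^ (a + 1)) (J ^ (b + 1))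
  rw [Ideal.map_pow, Ideal.map_pow, ← hIR, ← hJR] at hmin hker
  rw [minimalPrimes_eq_of_pow_le (sup_le_sup (Ideal.pow_le_self (by simp))
    (Ideal.pow_le_self (by simp))) (sup_pow_le IR JR a b)] at hmin
  rw [← hker]
  by_contra hne
  obtain ⟨Q, hQ, hQs⟩ := Unmixed.tensor (k := k) (unmixed_quotient (by simp) hI)
    (unmixed_quotient (by simp) hJ) _ hne
  obtain ⟨s, hs, hsx⟩ := mem_symbPow.1 hx _ (hmin ▸ Set.mem_image_of_mem _ hQ)
  refine hQs _ hs ?_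
  have := hker ▸ sup_pow_le IR JR a b hsx
  rw [Ideal.mem_comap, Ideal.mem_bot, map_mul] at this
  exact this

theorem comap_includeLeft_mem_minimalPrimes (I : Ideal A) (J : Ideal B) {P : Ideal (A ⊗[k] B)}
    (hP : P ∈ (I.map (Algebra.TensorProduct.includeLeft : A →ₐ[k] A ⊗[k] B) ⊔
        J.map (Algebra.TensorProduct.includeRight : B →ₐ[k] A ⊗[k] B)).minimalPrimes) :
    P.comap (Algebra.TensorProduct.includeLeft : A →ₐ[k] A ⊗[k] B) ∈ I.minimalPrimes := by
  rw [minimalPrimes_sup_eq] at hP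
  obtain ⟨Q, hQ, rfl⟩ := hP
  rw [Ideal.minimalPrimes_eq_comap]
  refine ⟨_, comap_mem_minimalPrimes_of_flat (algebraMap (A ⧸ I) ((A ⧸ I) ⊗[k] (B ⧸ J)))
    (RingHom.flat_algebraMap_iff.2 inferInstance) hQ, ?_⟩
  ext a
  simp [quotMap]

theorem comap_includeRight_mem_minimalPrimes (I : Ideal A) (J : Ideal B) {P : Ideal (A ⊗[k] B)}
    (hP : P ∈ (I.map (Algebra.TensorProduct.includeLeft : A →ₐ[k] A ⊗[k] B) ⊔
        J.map (Algebra.TensorProduct.includeRight : B →ₐ[k] A ⊗[k] B)).minimalPrimes) :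
    P.comap (Algebra.TensorProduct.includeRight : B →ₐ[k] A ⊗[k] B) ∈ J.minimalPrimes := by
  rw [minimalPrimes_sup_eq] at hP
  obtain ⟨Q, hQ, rfl⟩ := hP
  rw [Ideal.minimalPrimes_eq_comap]
  refine ⟨_, comap_mem_minimalPrimes_of_flat
    (Algebra.TensorProduct.includeRight : _ →ₐ[k] (A ⧸ I) ⊗[k] (B ⧸ J)).toRingHom ?_ hQ, ?_⟩
  · have h := RingHom.Flat.comp
      (RingHom.flat_algebraMap_iff.2 inferInstance :
        (algebraMap (B ⧸ J) ((B ⧸ J) ⊗[k] (A ⧸ I))).Flat)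
      (.of_bijective (f := (Algebra.TensorProduct.comm k (B ⧸ J) (A ⧸ I)).toRingEquiv.toRingHom)
        (Algebra.TensorProduct.comm k _ _).bijective)
    convert h using 1
    refine RingHom.ext fun b => ?_
    simp
  ext a
  simp [quotMap]

/-- A pure tensor of `A ⧸ I ⊗ B ⧸ J` vanishes only if one of its factors does. -/
theorem tmul_mem_sup {I : Ideal A} {J : Ideal B} {a : A} {b : B}
    (h : a ⊗ₜ[k] b ∈ I.map (Algebra.TensorProduct.includeLeft : A →ₐ[k] A ⊗[k] B) ⊔
        J.map (Algebra.TensorProduct.includeRight : B →ₐ[k] A ⊗[k] B)) : a ∈ I ∨ b ∈ J := by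
  rw [← comap_quotMap_bot, Ideal.mem_comap, Ideal.mem_bot] at h
  by_contra! hne
  have hb : Ideal.Quotient.mkₐ k J b ≠ 0 := fun h => hne.2 (Ideal.Quotient.eq_zero_iff_mem.1 h)
  refine hb ((Module.forall_dual_apply_eq_zero_iff k _).1 fun φ => ?_)
  have h2 : φ (Ideal.Quotient.mkₐ k J b) • Ideal.Quotient.mkₐ k I a = 0 := by
    have := congrArg (fun z => TensorProduct.rid k _ (φ.lTensor (A ⧸ I) z)) h
    simpa [quotMap] using this
  exact (smul_eq_zero.1 h2).resolve_right fun h => hne.1 (Ideal.Quotient.eq_zero_iff_mem.1 h)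

/-- A `k`-linear projection `ρ` of `A` onto `I` gives `ρ ⊗ 1`, which fixes the ideal generated by `I`
and maps the one generated by `J` into the product. -/
theorem inf_le_mul (I : Ideal A) (J : Ideal B) :
    I.map (Algebra.TensorProduct.includeLeft : A →ₐ[k] A ⊗[k] B) ⊓
        J.map (Algebra.TensorProduct.includeRight : B →ₐ[k] A ⊗[k] B) ≤
    I.map (Algebra.TensorProduct.includeLeft : A →ₐ[k] A ⊗[k] B) *
        J.map (Algebra.TensorProduct.includeRight : B →ₐ[k] A ⊗[k] B) := by
  rintro x ⟨hxI, hxJ⟩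
  obtain ⟨π, hπ⟩ := (Submodule.subtype (I.restrictScalars k)).exists_leftInverse_of_injective
    (Submodule.ker_subtype _)
  obtain ⟨y, hy⟩ : x ∈ LinearMap.range
      (LinearMap.rTensor B (Submodule.subtype (I.restrictScalars k))) := by
    rw [← Ideal.map_includeLeft_eq]
    exact hxI
  obtain ⟨z, hz⟩ : x ∈ LinearMap.range
      (LinearMap.lTensor A (Submodule.subtype (J.restrictScalars k))) := by
    rw [← Ideal.map_includeRight_eq]
    exact hxJ
  let ρ : A →ₗ[k] A := (Submodule.subtype (I.restrictScalars k)) ∘ₗ π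
  have h1 : ρ.rTensor B x = x := by
    rw [← hy, ← LinearMap.comp_apply, ← LinearMap.rTensor_comp]
    congr 2
    rw [LinearMap.comp_assoc, hπ, LinearMap.comp_id]
  rw [← h1, ← hz]
  clear hy hz h1
  induction z with
  | zero => simp
  | add x y hx hy => rw [map_add, map_add]; exact add_mem hx hy
  | tmul a j =>
    have : ρ.rTensor B (((Submodule.restrictScalars k J).subtype.lTensor A) (a ⊗ₜ j)) =
        (ρ a ⊗ₜ 1) * (1 ⊗ₜ (j : B)) := by simp
    rw [this]
    exact Ideal.mul_mem_mul (Ideal.mem_map_of_mem _ (π a).2) (Ideal.mem_map_of_mem _ j.2)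
end

/-- The other inclusion of `(I + J)ⁿ = ⋂ (I^{a+1} + J^{b+1})`. Modulo `(I + J)ⁿ`, the element `x` is
moved successively into `I⁰, I¹, …, Iⁿ`; the correction at step `a` lies in
`I^a ∩ J^{n-a} = I^a J^{n-a}`. -/
theorem mem_pow_of_forall_mem_sup {R : Type*} [CommRing R] (I J : Ideal R) (n : ℕ)
    (hIJ : ∀ a b, I ^ a ⊓ J ^ b ≤ I ^ a * J ^ b) {x : R}
    (hx : ∀ a b, a + b + 1 = n → x ∈ I ^ (a + 1) ⊔ J ^ (b + 1)) : x ∈ (I ⊔ J) ^ n := by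
  have hprod : ∀ a b, a + b = n → I ^ a ⊓ J ^ b ≤ (I ⊔ J) ^ n := by
    rintro a b rfl
    refine (hIJ a b).trans ?_
    rw [pow_add]
    exact Ideal.mul_mono (Ideal.pow_right_mono le_sup_left _) (Ideal.pow_right_mono le_sup_right _)
  have key : ∀ a b, a + b = n →
      ∃ y ∈ (I ⊔ J) ^ n ⊓ J ^ (b + 1), ∃ z ∈ I ^ a, x = y + z := by
    intro a
    induction a with
    | zero => exact fun b _ => ⟨0, zero_mem _, x, by simp, by simp⟩
    | succ a ih =>
      intro b hb
      obtain ⟨y, ⟨hy, hyJ⟩, z, hz, hxy⟩ := ih (b + 1) (by lia)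
      obtain ⟨u, hu, v, hv, huv⟩ := Submodule.mem_sup.1 (hx a b (by lia))
      have hyJ' : y ∈ J ^ (b + 1) := Ideal.pow_le_pow_right (by lia) hyJ
      have h1 : z - u = v - y := by linear_combination -hxy - huv
      have hw : z - u ∈ I ^ a ⊓ J ^ (b + 1) :=
        ⟨sub_mem hz (Ideal.pow_le_pow_right (by lia) hu), h1 ▸ sub_mem hv hyJ'⟩
      exact ⟨y + (z - u), ⟨add_mem hy (hprod a (b + 1) (by lia) hw), add_mem hyJ' hw.2⟩, u, hu,
        by linear_combination hxy⟩
  obtain ⟨y, hy, z, hz, rfl⟩ := key n 0 (by simp)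
  exact add_mem hy.1 (Ideal.pow_right_mono le_sup_left n hz)

/-! ### Pure tensors in powers of the sum -/

section
variable {k A B : Type} [Field k] [CommRing A] [CommRing B] [Algebra k A] [Algebra k B]

/-- A multiplier in `A` witnessing `a ∈ I^{(t)}` avoids the contraction of each minimal prime of
`I + J`, hence also witnesses the membership of `a ⊗ b`. -/
theorem tmul_mem_symbPow_left (I : Ideal A) (J : Ideal B) {t s : ℕ} {a : A} {b : B}
    (ha : a ∈ symbPow I t) (hb : b ∈ J ^ s) :
    a ⊗ₜ[k] b ∈ symbPow (I.map (Algebra.TensorProduct.includeLeft : A →ₐ[k] A ⊗[k] B) ⊔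
        J.map (Algebra.TensorProduct.includeRight : B →ₐ[k] A ⊗[k] B)) (t + s) := by
  refine mem_symbPow.2 fun P hP => ?_
  obtain ⟨c, hc, hca⟩ := mem_symbPow.1 ha _ (comap_includeLeft_mem_minimalPrimes I J hP)
  refine ⟨c ⊗ₜ 1, hc, ?_⟩
  have : (c ⊗ₜ[k] (1 : B)) * (a ⊗ₜ[k] b) = ((c * a) ⊗ₜ 1) * (1 ⊗ₜ b) := by simp
  rw [this, pow_add]
  refine Ideal.mul_mem_mul (Ideal.pow_right_mono le_sup_left _ ?_)
    (Ideal.pow_right_mono le_sup_right _ ?_)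
  · rw [← Ideal.map_pow]
    exact Ideal.mem_map_of_mem _ hca
  · rw [← Ideal.map_pow]
    exact Ideal.mem_map_of_mem _ hb

theorem tmul_mem_symbPow_right (I : Ideal A) (J : Ideal B) {t s : ℕ} {a : A} {b : B}
    (ha : a ∈ I ^ t) (hb : b ∈ symbPow J s) :
    a ⊗ₜ[k] b ∈ symbPow (I.map (Algebra.TensorProduct.includeLeft : A →ₐ[k] A ⊗[k] B) ⊔
        J.map (Algebra.TensorProduct.includeRight : B →ₐ[k] A ⊗[k] B)) (t + s) := by
  refine mem_symbPow.2 fun P hP => ?_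
  obtain ⟨c, hc, hcb⟩ := mem_symbPow.1 hb _ (comap_includeRight_mem_minimalPrimes I J hP)
  refine ⟨1 ⊗ₜ c, hc, ?_⟩
  have : ((1 : A) ⊗ₜ[k] c) * (a ⊗ₜ[k] b) = (a ⊗ₜ 1) * (1 ⊗ₜ (c * b)) := by simp
  rw [this, pow_add]
  refine Ideal.mul_mem_mul (Ideal.pow_right_mono le_sup_left _ ?_)
    (Ideal.pow_right_mono le_sup_right _ ?_)
  · rw [← Ideal.map_pow]
    exact Ideal.mem_map_of_mem _ ha
  · rw [← Ideal.map_pow]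
    exact Ideal.mem_map_of_mem _ hcb

theorem tmul_mem_pow_sup (I : Ideal A) (J : Ideal B) {t s : ℕ} {a : A} {b : B}
    (h : a ⊗ₜ[k] b ∈ (I.map (Algebra.TensorProduct.includeLeft : A →ₐ[k] A ⊗[k] B) ⊔
        J.map (Algebra.TensorProduct.includeRight : B →ₐ[k] A ⊗[k] B)) ^ (t + s + 1)) :
    a ∈ I ^ (t + 1) ∨ b ∈ J ^ (s + 1) := by
  have := sup_pow_le _ _ t s h
  rw [← Ideal.map_pow, ← Ideal.map_pow] at this
  exact tmul_mem_sup this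

end

/-- **Corollary 3.6**: let `A`, `B` be Noetherian `k`-algebras with `R = A ⊗ₖ B` Noetherian,
and `I ⊆ A`, `J ⊆ B` nonzero proper ideals with `Iᵗ ≠ Iᵗ⁺¹` and `Jᵗ ≠ Jᵗ⁺¹` for all
`t ≤ n-1`.  Then `(I+J)^{(n)} = (I+J)ⁿ` iff `I^{(t)} = Iᵗ` and `J^{(t)} = Jᵗ` for all `t ≤ n`. -/
theorem symbPow_sum_eq_pow_iff
    {k A B : Type} [Field k] [CommRing A] [CommRing B] [Algebra k A] [Algebra k B]
    [IsNoetherianRing A] [IsNoetherianRing B] [IsNoetherianRing (A ⊗[k] B)]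
    (I : Ideal A) (J : Ideal B) (hI0 : I ≠ ⊥) (hI1 : I ≠ ⊤) (hJ0 : J ≠ ⊥) (hJ1 : J ≠ ⊤)
    (n : ℕ) (hn : 1 ≤ n)
    (hIpow : ∀ t ≤ n - 1, I ^ t ≠ I ^ (t + 1))
    (hJpow : ∀ t ≤ n - 1, J ^ t ≠ J ^ (t + 1))
    (IR JR : Ideal (A ⊗[k] B))
    (hIR : IR = Ideal.map (Algebra.TensorProduct.includeLeft : A →ₐ[k] A ⊗[k] B) I)
    (hJR : JR = Ideal.map (Algebra.TensorProduct.includeRight : B →ₐ[k] A ⊗[k] B) J) :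
    symbPow (IR + JR) n = (IR + JR) ^ n ↔
      (∀ t ≤ n, symbPow I t = I ^ t) ∧ (∀ t ≤ n, symbPow J t = J ^ t) := by
  subst hIR hJR
  rw [Ideal.add_eq_sup]
  constructor
  · intro h
    refine ⟨fun t ht => le_antisymm (fun a ha => ?_) (pow_le_symbPow I t),
      fun t ht => le_antisymm (fun b hb => ?_) (pow_le_symbPow J t)⟩
    · obtain _ | t := t
      · simp
      obtain ⟨b, hb, hb'⟩ := SetLike.exists_of_lt
        (lt_of_le_of_ne (Ideal.pow_le_pow_right (Nat.le_succ _)) (hJpow (n - (t + 1)) (by lia)).symm)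
      have hmem := tmul_mem_symbPow_left (k := k) I J ha hb
      rw [show t + 1 + (n - (t + 1)) = n by lia, h] at hmem
      rw [show n = t + (n - (t + 1)) + 1 by lia] at hmem
      refine (tmul_mem_pow_sup I J hmem).resolve_right ?_
      exact hb'
    · obtain _ | t := t
      · simp
      obtain ⟨a, ha, ha'⟩ := SetLike.exists_of_lt
        (lt_of_le_of_ne (Ideal.pow_le_pow_right (Nat.le_succ _)) (hIpow (n - (t + 1)) (by lia)).symm)
      have hmem := tmul_mem_symbPow_right (k := k) I J ha hb
      rw [show n - (t + 1) + (t + 1) = n by lia, h] at hmem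
      obtain ⟨s, rfl⟩ : ∃ s, n = s + t + 1 := ⟨n - (t + 1), by lia⟩
      rw [show s + t + 1 - (t + 1) = s by lia] at ha'
      exact (tmul_mem_pow_sup I J hmem).resolve_left ha'
  · rintro ⟨hI, hJ⟩
    refine le_antisymm (fun x hx => ?_) (pow_le_symbPow _ n)
    refine mem_pow_of_forall_mem_sup _ _ n (fun a b => ?_) fun a b hab => ?_
    · rw [← Ideal.map_pow, ← Ideal.map_pow]
      exact inf_le_mul _ _
    · subst hab
      exact mem_sup_of_unmixed I J a b (hI _ (by lia)) (hJ _ (by lia)) hx
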